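/- Let (k : K → X, f : X → M) be a Schreier extension. The following statements are equivalent: (1) B_m = {x ∈ X : f(x) = m} for every m ∈ M; (2) B_1 = {x ∈ X : f(x) = 1}; (3) every element of K is invertible (i.e. K is a group). -/

import Mathlib

/-- A monoid extension: `K`, `X` additive monoids (not assumed commutative),
`M` a multiplicative monoid, `k : K → X` an injective monoid homomorphism whose image
is `{x | f x = 1}`, and `f : X → M` a surjective monoid homomorphism. -/
structure MonoidExtension {K X M : Type*} [AddMonoid K] [AddMonoid X] [Monoid M]
    (k : K → X) (f : X → M) : Prop where
  k_add : ∀ a b : K, k (a + b) = k a + k b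
  k_zero : k 0 = 0
  k_inj : Function.Injective k
  ker_eq : ∀ x : X, f x = 1 ↔ x ∈ Set.range k
  f_add : ∀ x y : X, f (x + y) = f x * f y
  f_zero : f 0 = 1
  f_surj : Function.Surjective f

/-- The set `B_m` of representatives of `m`. -/
def Reps {K X M : Type*} [AddMonoid K] [AddMonoid X] [Monoid M]
    (k : K → X) (f : X → M) (m : M) : Set X :=
  {u | f u = m ∧ ∀ x : X, f x = m → ∃! a : K, x = k a + u}

/-- A monoid extension is a Schreier extension if every `m` has a representative. -/
def IsSchreier {K X M : Type*} [AddMonoid K] [AddMonoid X] [Monoid M]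
    (k : K → X) (f : X → M) : Prop :=
  ∀ m : M, (Reps k f m).Nonempty

/-! If `u` represents `m`, then `a ↦ k a + u` identifies `K` with the fibre of `f` over `m`, and
under this identification the map `a ↦ k a + (k c + u)` becomes right translation of `K` by `c`.
Right translation by `c` is bijective exactly when `c` is invertible, so the representatives of `m`
are the elements `k c + u` with `c` invertible. -/

namespace MonoidExtension

variable {K X M : Type*} [AddMonoid K] [AddMonoid X] [Monoid M] {k : K → X} {f : X → M}
  {m : M} {u : X}

theorem map_k (hE : MonoidExtension k f) (a : K) : f (k a) = 1 :=
  (hE.ker_eq _).2 (Set.mem_range_self a)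

theorem map_k_add (hE : MonoidExtension k f) (a : K) (x : X) : f (k a + x) = f x := by
  rw [hE.f_add, hE.map_k, one_mul]

/-- The orbit map `a ↦ k a + u` of a point `u` over `m`, with codomain the fibre of `f` over `m`.
The proof of `f u = m` is an argument so that the orbit maps of all points over `m` share one
codomain. -/
def orbitMap (hE : MonoidExtension k f) (hu : f u = m) (a : K) : {x : X // f x = m} :=
  ⟨k a + u, (hE.map_k_add a u).trans hu⟩

theorem mem_reps_iff_orbitMap_bijective (hE : MonoidExtension k f) (hu : f u = m) :
    u ∈ Reps k f m ↔ Function.Bijective (hE.orbitMap hu) := by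
  simp [Reps, hu, orbitMap, Function.bijective_iff_existsUnique, Subtype.ext_iff, eq_comm]

theorem orbitMap_k_add (hE : MonoidExtension k f) (hu : f u = m) (c : K) :
    hE.orbitMap ((hE.map_k_add c u).trans hu) = hE.orbitMap hu ∘ (· + c) := by
  ext a
  simp [orbitMap, hE.k_add, add_assoc]

theorem k_add_mem_reps_iff (hE : MonoidExtension k f) (hu : u ∈ Reps k f m) (c : K) :
    k c + u ∈ Reps k f m ↔ IsAddUnit c := by
  have hbij : Function.Bijective (hE.orbitMap hu.1) :=
    (hE.mem_reps_iff_orbitMap_bijective hu.1).1 hu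
  rw [hE.mem_reps_iff_orbitMap_bijective ((hE.map_k_add c u).trans hu.1), hE.orbitMap_k_add hu.1,
    hbij.of_comp_iff', IsAddUnit.isAddUnit_iff_addRight_bijective]

theorem reps_eq_fiber_iff (hE : MonoidExtension k f) (hm : (Reps k f m).Nonempty) :
    Reps k f m = {x : X | f x = m} ↔ ∀ a : K, IsAddUnit a := by
  obtain ⟨u, hu⟩ := hm
  constructor
  · intro h a
    rw [← hE.k_add_mem_reps_iff hu, h]
    exact (hE.map_k_add a u).trans hu.1
  · intro h
    refine Set.Subset.antisymm (fun x hx ↦ hx.1) fun x hx ↦ ?_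
    obtain ⟨c, rfl, -⟩ := hu.2 x hx
    exact (hE.k_add_mem_reps_iff hu c).2 (h c)

end MonoidExtension

/-- Proposition 2.5 (prop:K_group): for a Schreier extension the following are equivalent:
(1) `B_m = f⁻¹ m` for all `m`; (2) `B_1 = Ker f`; (3) every element of `K` is invertible
(`K` is a group). -/
theorem kernel_group_tfae {K X M : Type*} [AddMonoid K] [AddMonoid X] [Monoid M]
    (k : K → X) (f : X → M) (hE : MonoidExtension k f) (hS : IsSchreier k f) :
    [(∀ m : M, Reps k f m = {x : X | f x = m}),
     (Reps k f 1 = {x : X | f x = 1}),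
     (∀ a : K, IsAddUnit a)].TFAE := by
  tfae_have 1 ↔ 3 :=
    ⟨fun h ↦ (hE.reps_eq_fiber_iff (hS 1)).1 (h 1), fun h m ↦ (hE.reps_eq_fiber_iff (hS m)).2 h⟩
  tfae_have 2 ↔ 3 := hE.reps_eq_fiber_iff (hS 1)
  tfae_finish
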